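/- Let A ∈ Mat_{n×n}(ℝ) be symmetric, let D be a totally symmetric tensor with entries D_{ijk} ∈ ℝ, and let H : ℝ^n → ℝ be given by H(u) = ½ Σ_{i,j} A_{ij} u_i u_j + (1/6) Σ_{i,j,k} D_{ijk} u_i u_j u_k. Let ∇̄H(v,u) be the map with components (∇̄H(v,u))_i = ½ Σ_j A_{ij}(v_j + u_j) + (1/6) Σ_{j,k} D_{ijk}( v_j (v_k + ½ u_k) + u_j (½ v_k + u_k) ). Let S ∈ Mat_{n×n}(ℝ) be skew-symmetric and Δt ∈ ℝ. If û, u^{n+1} ∈ ℝ^n satisfy u^{n+1} − û = Δt S ∇̄H(û, u^{n+1}), then H(u^{n+1}) = H(û). -/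

import Mathlib

open Matrix

/-!
Since `w ⬝ᵥ S *ᵥ w = 0` for skew-symmetric `S`, pairing the scheme with the discrete gradient gives
`(u - v) ⬝ᵥ ∇̄H(v, u) = 0`, while this pairing equals `H u - H v` for any discrete gradient. For the
Hamiltonian at hand, the latter identity is the symmetric-form version of the factorizations
`u² - v² = (u - v)(v + u)` and `u³ - v³ = (u - v)(v² + uv + u²)`.
-/

section Forms

variable {ι R : Type*} [Fintype ι]

theorem dotProduct_mulVec_comm_of_isSymm [NonUnitalCommSemiring R] {A : Matrix ι ι R}
    (hA : A.IsSymm) (u v : ι → R) : u ⬝ᵥ A *ᵥ v = v ⬝ᵥ A *ᵥ u := by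
  rw [← dotProduct_transpose_mulVec, hA]

theorem dotProduct_mulVec_self_eq_zero_of_transpose_eq_neg [NonUnitalCommRing R]
    [IsAddTorsionFree R] {S : Matrix ι ι R} (hS : Sᵀ = -S) (w : ι → R) : w ⬝ᵥ S *ᵥ w = 0 :=
  self_eq_neg.mp <| calc
    w ⬝ᵥ S *ᵥ w = w ⬝ᵥ Sᵀ *ᵥ w := (dotProduct_transpose_mulVec S w w).symm
    _ = -(w ⬝ᵥ S *ᵥ w) := by rw [hS, neg_mulVec, dotProduct_neg]

theorem sub_dotProduct_mulVec_add_of_isSymm [NonUnitalCommRing R] {A : Matrix ι ι R}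
    (hA : A.IsSymm) (u v : ι → R) :
    (u - v) ⬝ᵥ A *ᵥ (v + u) = u ⬝ᵥ A *ᵥ u - v ⬝ᵥ A *ᵥ v := by
  rw [mulVec_add, sub_dotProduct, dotProduct_add, dotProduct_add,
    dotProduct_mulVec_comm_of_isSymm hA u v]
  abel

theorem eq_of_sub_eq_smul_mulVec_of_transpose_eq_neg [CommRing R] [IsAddTorsionFree R]
    {S : Matrix ι ι R} (hS : Sᵀ = -S) {H : (ι → R) → R} {g u v : ι → R} {τ : R}
    (hg : (u - v) ⬝ᵥ g = H u - H v) (hstep : u - v = τ • (S *ᵥ g)) : H u = H v := by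
  rw [← sub_eq_zero, ← hg, hstep, smul_dotProduct, dotProduct_comm,
    dotProduct_mulVec_self_eq_zero_of_transpose_eq_neg hS, smul_zero]

end Forms

section CubicForm

variable {ι R : Type*} [Fintype ι]

/-- The matrix `D(w)` with entries `∑ k, D i j k * w k`, the contraction of the tensor `D` with `w`
in its last index. The trilinear form of `D` is then `u ⬝ᵥ D(w) *ᵥ v`. -/
def tensorContract [NonUnitalNonAssocSemiring R] (D : ι → ι → ι → R) (w : ι → R) :
    Matrix ι ι R :=
  Matrix.of fun i j => D i j ⬝ᵥ w

theorem tensorContract_add [NonUnitalNonAssocSemiring R] (D : ι → ι → ι → R) (v w : ι → R) :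
    tensorContract D (v + w) = tensorContract D v + tensorContract D w := by
  ext i j
  exact dotProduct_add (D i j) v w

theorem tensorContract_smul [CommSemiring R] (D : ι → ι → ι → R) (c : R) (w : ι → R) :
    tensorContract D (c • w) = c • tensorContract D w := by
  ext i j
  exact dotProduct_smul c (D i j) w

theorem isSymm_tensorContract [NonUnitalNonAssocSemiring R] {D : ι → ι → ι → R}
    (hD : ∀ i j k, D i j k = D j i k) (w : ι → R) : (tensorContract D w).IsSymm :=
  IsSymm.ext fun i j => congrArg (· ⬝ᵥ w) (funext (hD j i))

theorem tensorContract_mulVec_apply [NonUnitalSemiring R] (D : ι → ι → ι → R) (v w : ι → R)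
    (i : ι) : (tensorContract D w *ᵥ v) i = ∑ j, ∑ k, D i j k * w k * v j := by
  simp only [tensorContract, mulVec, dotProduct, of_apply, Finset.sum_mul]

theorem tensorContract_mulVec_comm [NonUnitalCommSemiring R] {D : ι → ι → ι → R}
    (hD : ∀ i j k, D i j k = D i k j) (v w : ι → R) :
    tensorContract D w *ᵥ v = tensorContract D v *ᵥ w := by
  ext i
  rw [tensorContract_mulVec_apply, tensorContract_mulVec_apply, Finset.sum_comm]
  refine Finset.sum_congr rfl fun k _ => Finset.sum_congr rfl fun j _ => ?_
  rw [hD i j k, mul_right_comm]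

theorem sub_dotProduct_tensorContract_mulVec [NonUnitalCommRing R] {D : ι → ι → ι → R}
    (hleft : ∀ i j k, D i j k = D j i k) (hright : ∀ i j k, D i j k = D i k j) (u v : ι → R) :
    (u - v) ⬝ᵥ (tensorContract D v *ᵥ v + tensorContract D u *ᵥ v + tensorContract D u *ᵥ u) =
      u ⬝ᵥ tensorContract D u *ᵥ u - v ⬝ᵥ tensorContract D v *ᵥ v := by
  have huvv : u ⬝ᵥ tensorContract D v *ᵥ v = v ⬝ᵥ tensorContract D u *ᵥ v := by
    rw [dotProduct_mulVec_comm_of_isSymm (isSymm_tensorContract hleft v),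
      tensorContract_mulVec_comm hright]
  have huuv : u ⬝ᵥ tensorContract D u *ᵥ v = v ⬝ᵥ tensorContract D u *ᵥ u :=
    dotProduct_mulVec_comm_of_isSymm (isSymm_tensorContract hleft u) u v
  simp only [sub_dotProduct, dotProduct_add, huvv, huuv]
  abel

end CubicForm

section CubicHamiltonian

variable {ι K : Type*} [Fintype ι] [Field K]

/-- The Hamiltonian `½ uᵀ A u + ⅙ ∑ D i j k * u i * u j * u k` with quadratic part `A` and cubic
part `D`. -/
def cubicHamiltonian (A : Matrix ι ι K) (D : ι → ι → ι → K) (u : ι → K) : K :=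
  (1 / 2) * (u ⬝ᵥ A *ᵥ u) + (1 / 6) * (u ⬝ᵥ tensorContract D u *ᵥ u)

/-- The Average Vector Field discrete gradient of `cubicHamiltonian A D`: for symmetric `A` and `D`
over `ℝ`, it is the mean of the gradient on the segment from `v` to `u`, in closed form. -/
def avfGradient (A : Matrix ι ι K) (D : ι → ι → ι → K) (v u : ι → K) : ι → K :=
  (1 / 2 : K) • (A *ᵥ (v + u)) +
    (1 / 6 : K) • (tensorContract D (v + (1 / 2 : K) • u) *ᵥ v +
      tensorContract D ((1 / 2 : K) • v + u) *ᵥ u)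

theorem cubicHamiltonian_eq_sum (A : Matrix ι ι K) (D : ι → ι → ι → K) (u : ι → K) :
    cubicHamiltonian A D u =
      (1 / 2) * ∑ i, ∑ j, A i j * u i * u j +
        (1 / 6) * ∑ i, ∑ j, ∑ k, D i j k * u i * u j * u k := by
  have hquad : u ⬝ᵥ A *ᵥ u = ∑ i, ∑ j, A i j * u i * u j := by
    simp only [dotProduct, mulVec, Finset.mul_sum, mul_left_comm, mul_assoc]
  have hcubic : u ⬝ᵥ tensorContract D u *ᵥ u = ∑ i, ∑ j, ∑ k, D i j k * u i * u j * u k := by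
    simp only [dotProduct, tensorContract_mulVec_apply, Finset.mul_sum]
    refine Finset.sum_congr rfl fun i _ => Finset.sum_congr rfl fun j _ =>
      Finset.sum_congr rfl fun k _ => ?_
    ring
  rw [cubicHamiltonian, hquad, hcubic]

theorem avfGradient_apply (A : Matrix ι ι K) (D : ι → ι → ι → K) (v u : ι → K) (i : ι) :
    avfGradient A D v u i =
      (1 / 2) * ∑ j, A i j * (v j + u j) +
        (1 / 6) * ∑ j, ∑ k, D i j k *
          (v j * (v k + (1 / 2) * u k) + u j * ((1 / 2) * v k + u k)) := by
  simp only [avfGradient, Pi.add_apply, Pi.smul_apply, smul_eq_mul, tensorContract_mulVec_apply,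
    ← Finset.sum_add_distrib]
  refine congrArg₂ (· + ·) rfl (congrArg _ ?_)
  refine Finset.sum_congr rfl fun j _ => Finset.sum_congr rfl fun k _ => ?_
  ring

variable [CharZero K]

theorem avfGradient_eq_of_symm (A : Matrix ι ι K) {D : ι → ι → ι → K}
    (hD : ∀ i j k, D i j k = D i k j) (v u : ι → K) :
    avfGradient A D v u = (1 / 2 : K) • (A *ᵥ (v + u)) + (1 / 6 : K) •
      (tensorContract D v *ᵥ v + tensorContract D u *ᵥ v + tensorContract D u *ᵥ u) := by
  rw [avfGradient, tensorContract_add, tensorContract_add, tensorContract_smul,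
    tensorContract_smul, add_mulVec, add_mulVec, smul_mulVec, smul_mulVec,
    tensorContract_mulVec_comm hD u v]
  module

theorem sub_dotProduct_avfGradient {A : Matrix ι ι K} (hA : A.IsSymm) {D : ι → ι → ι → K}
    (hleft : ∀ i j k, D i j k = D j i k) (hright : ∀ i j k, D i j k = D i k j) (u v : ι → K) :
    (u - v) ⬝ᵥ avfGradient A D v u = cubicHamiltonian A D u - cubicHamiltonian A D v := by
  rw [avfGradient_eq_of_symm A hright, dotProduct_add, dotProduct_smul, dotProduct_smul,
    sub_dotProduct_mulVec_add_of_isSymm hA, sub_dotProduct_tensorContract_mulVec hleft hright]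
  simp only [cubicHamiltonian, smul_eq_mul]
  ring

theorem bbm_H2_scheme_preserves_H2_general {A : Matrix ι ι K} (hA : A.IsSymm)
    {D : ι → ι → ι → K} (hleft : ∀ i j k, D i j k = D j i k)
    (hright : ∀ i j k, D i j k = D i k j) {S : Matrix ι ι K} (hS : Sᵀ = -S) {Δt : K}
    {v u : ι → K} (hscheme : u - v = Δt • (S *ᵥ avfGradient A D v u)) :
    cubicHamiltonian A D u = cubicHamiltonian A D v :=
  eq_of_sub_eq_smul_mulVec_of_transpose_eq_neg hS
    (sub_dotProduct_avfGradient hA hleft hright u v) hscheme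

end CubicHamiltonian

/-- The H²-preserving scheme for the BBM equation: for
`H(u) = ½ Σ A_{ij} uᵢuⱼ + (1/6) Σ D_{ijk} uᵢuⱼu_k` with `A` symmetric, `D` totally
symmetric, the discrete gradient `∇̄H` as given, and `S` skew-symmetric, the step
`u^{n+1} - û = Δt S ∇̄H(û, u^{n+1})` satisfies `H(u^{n+1}) = H(û)`. -/
theorem bbm_H2_scheme_preserves_H2 {n : ℕ}
    (A : Matrix (Fin n) (Fin n) ℝ) (hA : Aᵀ = A)
    (D : Fin n → Fin n → Fin n → ℝ)
    (hD : ∀ i j k, D i j k = D j i k ∧ D i j k = D i k j)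
    (H : (Fin n → ℝ) → ℝ)
    (hH : ∀ u : Fin n → ℝ, H u =
      (1/2) * ∑ i, ∑ j, A i j * u i * u j
      + (1/6) * ∑ i, ∑ j, ∑ k, D i j k * u i * u j * u k)
    (DG : (Fin n → ℝ) → (Fin n → ℝ) → (Fin n → ℝ))
    (hDGdef : ∀ (v u : Fin n → ℝ) (i : Fin n), DG v u i =
      (1/2) * ∑ j, A i j * (v j + u j)
      + (1/6) * ∑ j, ∑ k, D i j k *
          (v j * (v k + (1/2) * u k) + u j * ((1/2) * v k + u k)))
    (S : Matrix (Fin n) (Fin n) ℝ) (hS : Sᵀ = -S)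
    (Δt : ℝ) (uhat u1 : Fin n → ℝ)
    (hscheme : u1 - uhat = Δt • (S *ᵥ DG uhat u1)) :
    H u1 = H uhat := by
  obtain rfl : H = cubicHamiltonian A D :=
    funext fun u => (hH u).trans (cubicHamiltonian_eq_sum A D u).symm
  obtain rfl : DG = avfGradient A D :=
    funext₃ fun v u i => (hDGdef v u i).trans (avfGradient_apply A D v u i).symm
  exact bbm_H2_scheme_preserves_H2_general hA (fun i j k => (hD i j k).1)
    (fun i j k => (hD i j k).2) hS hscheme
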